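/- arXiv:2110.10946 — 2 statements merged into one kernel-verified Lean document; each statement's English description precedes it below -/
import Mathlib

section
/- Let M be a normal subgroup of a finite group H such that the index [H : M] is odd, and let χ be a real-valued irreducible complex character of M. Then χ has a unique real-valued extension to its inertia group H_χ (the stabilizer of χ in H). -/
open CategoryTheory

/-- The inertia group of a class function `χ` (given as a function on the ambient
group `H`, vanishing outside the normal subgroup on which it is a character):
the stabilizer of `χ` under the conjugation action of `H`. -/
def inertiaGroup {H : Type} [Group H] (χ : H → ℂ) : Subgroup H where
  carrier := {g | ∀ x, χ (g⁻¹ * x * g) = χ x}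
  one_mem' := by intro x; simp
  mul_mem' := by
    intro a b ha hb x
    have e : (a * b)⁻¹ * x * (a * b) = b⁻¹ * (a⁻¹ * x * a) * b := by group
    rw [e, hb (a⁻¹ * x * a), ha x]
  inv_mem' := by
    intro a ha x
    have h := ha (a * x * a⁻¹)
    have e : a⁻¹ * (a * x * a⁻¹) * a = x := by group
    rw [e] at h
    have e2 : a⁻¹⁻¹ * x * a⁻¹ = a * x * a⁻¹ := by group
    rw [e2, h]

/-- `χ` (a function on the ambient group `G`) restricts to an irreducible complex
character of the subgroup `K`. -/
def IsIrredCharOn {G : Type} [Group G] (K : Subgroup G) (χ : G → ℂ) : Prop :=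
  ∃ V : FDRep ℂ K, Simple V ∧ ∀ k : K, χ k = V.character k

namespace NT

/-- Same character as a simple representation: simple and isomorphic. -/
lemma iso_of_char {G : Type} [Group G] [Finite G] (V W : FDRep ℂ G) [hV : Simple V]
    (h : ∀ g, V.character g = W.character g) :
    ∃ e : V ≃ₗ[ℂ] W, ∀ g v, e (V.ρ g v) = W.ρ g (e v) := by
  classical
  have := Fintype.ofFinite G
  have hW : Simple W := by
    rw [FDRep.simple_iff_char_is_norm_one] at hV ⊢
    simpa [h] using hV
  have := invertibleOfNonzero (NeZero.ne (Nat.card G : ℂ))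
  have h1 := FDRep.char_orthonormal V W
  have h2 := (FDRep.simple_iff_char_is_norm_one V).1 hV
  have h3 : Nonempty (V ≅ W) := by
    by_contra hc
    rw [if_neg hc] at h1
    simp only [← h] at h1
    rw [h2, inv_mul_cancel_of_invertible] at h1
    exact one_ne_zero h1
  obtain ⟨i⟩ := h3
  refine ⟨FDRep.isoToLinearEquiv i, fun g v => ?_⟩
  rw [FDRep.Iso.conj_ρ i g]
  simp [LinearEquiv.conj_apply]

/-- Schur. -/
lemma schur {G : Type} [Group G] [Finite G] (V : FDRep ℂ G) [hV : Simple V]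
    (f : V →ₗ[ℂ] V) (hf : ∀ g v, f (V.ρ g v) = V.ρ g (f v)) :
    ∃ c : ℂ, ∀ v, f v = c • v := by
  let F : V ⟶ V := FDRep.forget₂HomLinearEquiv V V (Rep.ofHom ⟨f, fun g => by
    ext v; exact hf g v⟩)
  have h1 := (FDRep.simple_iff_end_is_rank_one V).1 hV
  obtain ⟨c, hc⟩ := (finrank_eq_one_iff_of_nonzero' (𝟙 V) (id_nonzero V)).1 h1 F
  refine ⟨c, fun v => ?_⟩
  have := congrArg (fun (F : V ⟶ V) => F.hom.hom.hom v) hc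
  exact this.symm

/-- converse Schur. -/
lemma simple_of_schur {G : Type} [Group G] [Finite G] (V : FDRep ℂ G) [Nontrivial V]
    (h : ∀ f : V →ₗ[ℂ] V, (∀ g v, f (V.ρ g v) = V.ρ g (f v)) → ∃ c : ℂ, ∀ v, f v = c • v) :
    Simple V := by
  rw [FDRep.simple_iff_end_is_rank_one]
  have hne : 𝟙 V ≠ 0 := by
    intro h0
    obtain ⟨v, hv⟩ := exists_ne (0 : V)
    have := congrArg (fun (F : V ⟶ V) => F.hom.hom.hom v) h0
    exact hv this
  refine (finrank_eq_one_iff_of_nonzero' (𝟙 V) hne).2 fun F => ?_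
  obtain ⟨c, hc⟩ := h F.hom.hom.hom (fun g v => 
    ConcreteCategory.congr_hom ((forget (FGModuleCat ℂ)).congr_map (F.comm g)) v)
  refine ⟨c, ?_⟩
  ext v
  exact (hc v).symm

lemma nontrivial_of_simple {G : Type} [Group G] [Finite G] (V : FDRep ℂ G) [hV : Simple V] :
    Nontrivial V := by
  by_contra h
  rw [not_nontrivial_iff_subsingleton] at h
  apply id_nonzero V
  ext v
  exact Subsingleton.elim (α := V) _ _

open scoped ComplexOrder in
lemma char_inv_star {G : Type} [Group G] [Finite G] {V : Type} [AddCommGroup V] [Module ℂ V]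
    [Module.Finite ℂ V] (ρ : G →* Module.End ℂ V) (g : G) :
    LinearMap.trace ℂ V (ρ g⁻¹) = star (LinearMap.trace ℂ V (ρ g)) := by
  classical
  have := Fintype.ofFinite G
  let b := Module.finBasis ℂ V
  let A : G →* Matrix _ _ ℂ := (LinearMap.toMatrixAlgEquiv b).toMulEquiv.toMonoidHom.comp ρ
  have htr : ∀ g, LinearMap.trace ℂ V (ρ g) = (A g).trace := fun g =>
    LinearMap.trace_eq_matrix_trace ℂ b (ρ g)
  let S := ∑ x : G, (A x).conjTranspose * A x
  have hS : S.PosDef := by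
    have h1 : S = (A 1).conjTranspose * A 1 + ∑ x ∈ Finset.univ.erase 1, (A x).conjTranspose * A x := 
      (Finset.add_sum_erase _ _ (Finset.mem_univ 1)).symm
    rw [h1]
    apply Matrix.PosDef.add_posSemidef
    · simpa using Matrix.PosDef.one
    · exact Matrix.posSemidef_sum _ fun x _ => Matrix.posSemidef_conjTranspose_mul_self _
  have hinv : (A g).conjTranspose * S = S * A g⁻¹ := by
    simp only [S, Finset.mul_sum, Finset.sum_mul]
    refine Fintype.sum_equiv (Equiv.mulRight g) _ _ fun x => ?_
    simp only [Equiv.coe_mulRight, map_mul, Matrix.conjTranspose_mul, Matrix.mul_assoc]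
    rw [← map_mul A g, mul_inv_cancel, map_one, Matrix.mul_one]
  obtain ⟨u, hu⟩ := hS.isUnit
  rw [htr, htr, ← Matrix.trace_conjTranspose]
  have key : A g⁻¹ = (↑u⁻¹ : Matrix _ _ ℂ) * ((A g).conjTranspose * S) := by
    rw [hinv, ← hu, ← Matrix.mul_assoc, ← Units.val_mul]; simp
  rw [key, Matrix.trace_mul_comm, Matrix.mul_assoc, ← hu, ← Units.val_mul]
  simp


section core
variable {G : Type} [Group G] (N : Subgroup G) [N.Normal] {V : Type} [AddCommGroup V] [Module ℂ V]
    (ρ : N →* Module.End ℂ V) (B : V ≃ₗ[ℂ] Module.Dual ℂ V)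

/-- `P` intertwines conjugation by `g` and preserves `B`. -/
structure Good (g : G) (P : Module.End ℂ V) : Prop where
  unit : IsUnit P
  inter : ∀ n, P * ρ n = ρ (MulAut.conjNormal g n) * P
  form : ∀ v w, B (P v) (P w) = B v w

variable {N ρ B}

lemma Good.mul {g h : G} {P Q : Module.End ℂ V} (hP : Good N ρ B g P) (hQ : Good N ρ B h Q) :
    Good N ρ B (g * h) (P * Q) where
  unit := hP.unit.mul hQ.unit
  inter n := by
    rw [mul_assoc, hQ.inter, ← mul_assoc, hP.inter, mul_assoc, map_mul]; rfl
  form v w := by simp [hP.form, hQ.form]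

lemma good_base (hB : ∀ n v w, B (ρ n v) (ρ n w) = B v w) (n : N) : Good N ρ B n (ρ n) where
  unit := (Group.isUnit n).map ρ
  inter m := by
    rw [← map_mul, ← map_mul]; congr 1; ext; simp
  form := hB n

lemma Good.smul {g : G} {P : Module.End ℂ V} (hP : Good N ρ B g P) {c : ℂ} (hc : c * c = 1) :
    Good N ρ B g (c • P) where
  unit := by
    have hc0 : c ≠ 0 := by rintro rfl; simp at hc
    simpa using hP.unit.smul (Units.mk0 c hc0)
  inter n := by rw [smul_mul_assoc, hP.inter, mul_smul_comm]
  form v w := by simp [hP.form, ← mul_assoc, hc]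

lemma Good.unique [Nontrivial V]
    (hschur : ∀ f : Module.End ℂ V, (∀ n, f * ρ n = ρ n * f) → ∃ c : ℂ, f = c • 1)
    {g : G} {P Q : Module.End ℂ V} (hP : Good N ρ B g P) (hQ : Good N ρ B g Q) :
    ∃ c : ℂ, c * c = 1 ∧ Q = c • P := by
  obtain ⟨u, rfl⟩ := hP.unit
  obtain ⟨c, hc⟩ := hschur (↑u⁻¹ * Q) (fun n => by
    rw [mul_assoc, hQ.inter, Units.inv_mul_eq_iff_eq_mul, ← mul_assoc, ← mul_assoc, hP.inter]
    simp [mul_assoc])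
  have hQ' : Q = c • (u : Module.End ℂ V) := by
    rw [Units.inv_mul_eq_iff_eq_mul] at hc
    simpa using hc
  refine ⟨c, ?_, hQ'⟩
  obtain ⟨v, hv⟩ := exists_ne (0 : V)
  have : B v ≠ 0 := by simpa using hv
  obtain ⟨w, hw⟩ := DFunLike.ne_iff.1 this
  have h1 := hQ.form v w
  rw [hQ'] at h1
  simp [hP.form, ← mul_assoc] at h1
  simp at hw
  exact mul_right_cancel₀ hw (h1.trans (one_mul _).symm)

lemma exists_good [Nontrivial V]
    (hschur : ∀ f : Module.End ℂ V, (∀ n, f * ρ n = ρ n * f) → ∃ c : ℂ, f = c • 1)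
    (hB : ∀ n v w, B (ρ n v) (ρ n w) = B v w)
    (g : G) (P : V ≃ₗ[ℂ] V) (hP : ∀ n v, P (ρ n v) = ρ (MulAut.conjNormal g n) (P v)) :
    ∃ Q, Good N ρ B g Q := by
  let B' : V →ₗ[ℂ] Module.Dual ℂ V := P.toLinearMap.dualMap ∘ₗ B.toLinearMap ∘ₗ P.toLinearMap
  have hB' : ∀ v w, B' v w = B (P v) (P w) := fun _ _ => rfl
  obtain ⟨c, hc⟩ := hschur (B.symm.toLinearMap ∘ₗ B') (fun n => by
    ext v
    apply B.injective
    ext w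
    obtain ⟨w, rfl⟩ : ∃ w', ρ n w' = w := ⟨ρ n⁻¹ w, by
      rw [← Module.End.mul_apply, ← map_mul]; simp⟩
    simp [hB', hB, hP])
  have hc' : ∀ v w, B (P v) (P w) = c * B v w := by
    intro v w
    have := congrArg (fun f => B (f v) w) hc
    simpa [hB'] using this
  have hc0 : c ≠ 0 := by
    rintro rfl
    obtain ⟨v, hv⟩ := exists_ne (0 : V)
    have : B v ≠ 0 := by simpa using hv
    obtain ⟨w, hw⟩ := DFunLike.ne_iff.1 this
    have := hc' (P.symm v) (P.symm w)
    simp at this hw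
    exact hw this
  obtain ⟨d, hd⟩ := IsAlgClosed.exists_pow_nat_eq (c⁻¹) (n := 2) (by norm_num)
  have hd0 : d ≠ 0 := by rintro rfl; simp at hd; exact hc0 hd.symm
  refine ⟨d • P.toLinearMap, ?_, ?_, ?_⟩
  · have : IsUnit (P.toLinearMap : Module.End ℂ V) := (Module.End.isUnit_iff _).2 P.bijective
    simpa using this.smul (Units.mk0 d hd0)
  · intro n; ext v; simp [hP]
  · intro v w
    simp [hc', ← mul_assoc]
    rw [← sq, hd, inv_mul_cancel₀ hc0, one_mul]

lemma core [Nontrivial V] [Finite G] (hodd : Odd N.index)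
    (hschur : ∀ f : Module.End ℂ V, (∀ n, f * ρ n = ρ n * f) → ∃ c : ℂ, f = c • 1)
    (hB : ∀ n v w, B (ρ n v) (ρ n w) = B v w)
    (hP : ∀ g : G, ∃ P : V ≃ₗ[ℂ] V, ∀ n v, P (ρ n v) = ρ (MulAut.conjNormal g n) (P v)) :
    ∃ σ : G →* Module.End ℂ V, (∀ n : N, σ n = ρ n) ∧ ∀ g v w, B (σ g v) (σ g w) = B v w := by
  classical
  have hex : ∀ g, ∃ Q, Good N ρ B g Q := fun g => by
    obtain ⟨P, h⟩ := hP g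
    exact exists_good hschur hB g P h
  choose P0 hP0 using hex
  let s : G → G := fun g => ((g : G ⧸ N)).out
  have hs : ∀ g, (s g)⁻¹ * g ∈ N := fun g => by
    rw [← QuotientGroup.eq]; exact Quotient.out_eq' _
  have hsn : ∀ g (n : N), s (g * n) = s g := fun g n => by
    simp only [s]
    congr 1
    rw [QuotientGroup.eq]; simp
  let P : G → Module.End ℂ V := fun g => P0 (s g) * ρ ⟨(s g)⁻¹ * g, hs g⟩
  have hPg : ∀ g, Good N ρ B g (P g) := fun g => by
    have := (hP0 (s g)).mul (good_base hB ⟨(s g)⁻¹ * g, hs g⟩)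
    simpa using this
  have hPr : ∀ g (n : N), P (g * n) = P g * ρ n := fun g n => by
    simp only [P, mul_assoc, ← map_mul]
    have h1 : (⟨(s (g * n))⁻¹ * (g * n), hs (g * n)⟩ : N) = ⟨(s g)⁻¹ * g, hs g⟩ * n := by
      ext; simp [hsn, mul_assoc]
    rw [h1, hsn]
  have hPl : ∀ g (n : N), P (n * g) = ρ n * P g := fun g n => by
    have : (n : G) * g = g * (MulAut.conjNormal g⁻¹ n : N) := by simp [mul_assoc]
    rw [this, hPr, (hPg g).inter]
    congr 2
    ext; simp [mul_assoc]
  have hP0 : ∀ g, P g ≠ 0 := fun g => (hPg g).unit.ne_zero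
  have hα : ∀ g h, ∃ c : ℂ, c * c = 1 ∧ P g * P h = c • P (g * h) := fun g h =>
    (hPg (g * h)).unique hschur ((hPg g).mul (hPg h))
  choose α hα1 hα2 using hα
  have cancel : ∀ {a b : ℂ} (g : G), a • P g = b • P g → a = b := fun g h =>
    smul_left_injective ℂ (hP0 g) h
  have hαr : ∀ g h (n : N), α g (h * n) = α g h := fun g h n => by
    apply cancel (g * (h * n))
    rw [← hα2, hPr, ← mul_assoc, hα2, ← mul_assoc, hPr, smul_mul_assoc]
  have hαl : ∀ g h (n : N), α (g * n) h = α g h := fun g h n => by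
    have h1 : α (g * n) h = α g (n * h) := by
      apply cancel (g * n * h)
      rw [← hα2, hPr, mul_assoc, ← hPl, hα2, ← mul_assoc]
    have : (n : G) * h = h * (MulAut.conjNormal h⁻¹ n : N) := by simp [mul_assoc]
    rw [h1, this, hαr]
  have hcoc : ∀ x y z, α x y * α (x * y) z = α y z * α x (y * z) := fun x y z => by
    apply cancel (x * (y * z))
    have := mul_assoc (P x) (P y) (P z)
    rw [hα2, hα2 y z, smul_mul_assoc, mul_smul_comm, hα2, hα2, smul_smul, smul_smul] at this
    rw [← this, mul_assoc]
  have := Fintype.ofFinite (G ⧸ N)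
  have hout : ∀ g h : G, α g ((h : G ⧸ N)).out = α g h := fun g h => by
    have : h = s h * (⟨(s h)⁻¹ * h, hs h⟩ : N) := by simp
    conv_rhs => rw [this, hαr]
  let β : G → ℂ := fun g => ∏ q : G ⧸ N, α g q.out
  have hβ1 : ∀ g, β g * β g = 1 := fun g => by
    simp [β, ← Finset.prod_mul_distrib, hα1]
  have hβn : ∀ g (n : N), β (g * n) = β g := fun g n => by
    simp [β, hαl]
  have hcard : Odd (Fintype.card (G ⧸ N)) := by
    rwa [← Nat.card_eq_fintype_card]
  have hβ : ∀ x y, α x y * β (x * y) = β y * β x := fun x y => by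
    have h1 : β x = ∏ q : G ⧸ N, α x (y * q.out) := by
      refine (Fintype.prod_equiv (MulAction.toPerm y) _ _ fun q => ?_).symm
      rw [← hout]
      congr 2
      conv_rhs => rw [← Quotient.out_eq' q]
      rfl
    have h2 : α x y = ∏ q : G ⧸ N, α x y := by
      rw [Finset.prod_const, Finset.card_univ]
      obtain ⟨k, hk⟩ := hcard
      rw [hk, pow_succ, pow_mul, sq, hα1]; simp
    rw [h1, h2]
    simp only [β, ← Finset.prod_mul_distrib]
    exact Finset.prod_congr rfl fun q _ => hcoc _ _ _
  have hmul : ∀ g h, β (g * h) • P (g * h) = (β g • P g) * (β h • P h) := fun g h => by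
    rw [smul_mul_smul_comm, hα2, smul_smul]
    congr 1
    rw [mul_comm (β g), ← hβ]
    linear_combination (-β (g * h)) * hα1 g h
  have hone : β 1 • P 1 = 1 := by
    have h1 := hmul 1 1
    rw [mul_one] at h1
    have hu := ((hPg 1).smul (hβ1 1)).unit
    exact (hu.mul_left_cancel (by rw [← h1, mul_one])).symm 
  refine ⟨⟨⟨fun g => β g • P g, hone⟩, hmul⟩, fun n => ?_, fun g => ?_⟩
  · change β n • P n = ρ n
    have h1 := hPr 1 n
    have h2 := hβn 1 n
    rw [one_mul] at h1 h2
    rw [h1, h2, ← smul_mul_assoc, hone, one_mul]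
  · exact ((hPg g).smul (hβ1 g)).form
end core

lemma iso_of_char' {G : Type} [Group G] [Finite G] (V : FDRep ℂ G) [hV : Simple V]
    {U : Type} [AddCommGroup U] [Module ℂ U] [Module.Finite ℂ U] (σ : G →* Module.End ℂ U)
    (h : ∀ g, V.character g = LinearMap.trace ℂ U (σ g)) :
    ∃ e : V ≃ₗ[ℂ] U, ∀ g v, e (V.ρ g v) = σ g (e v) :=
  iso_of_char V (FDRep.of σ) h

lemma exists_ext {G : Type} [Group G] [Finite G] (N : Subgroup G) [N.Normal] (hodd : Odd N.index)
    (V : FDRep ℂ N) [hV : Simple V] (hreal : ∀ n, (V.character n).im = 0)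
    (hinv : ∀ (g : G) n, V.character (MulAut.conjNormal g n) = V.character n) :
    ∃ W : FDRep ℂ G, Simple W ∧ (∀ n : N, W.character n = V.character n) ∧
      ∀ g, (W.character g).im = 0 := by
  have hnt := nontrivial_of_simple V
  have hstar : ∀ n, V.character n⁻¹ = V.character n := fun n => by
    have h := char_inv_star V.ρ n
    change V.character n⁻¹ = star (V.character n) at h
    rw [h]
    exact Complex.conj_eq_iff_im.2 (hreal n)
  obtain ⟨B, hB⟩ := iso_of_char' V (Representation.dual V.ρ) (fun n => by
    rw [← hstar]; exact (Representation.char_dual V.ρ n).symm)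
  have hB' : ∀ n v w, B (V.ρ n v) (V.ρ n w) = B v w := fun n v w => by
    rw [hB]
    change (B v) (V.ρ n⁻¹ (V.ρ n w)) = _
    rw [← Module.End.mul_apply, ← map_mul]; simp
  have hP : ∀ g : G, ∃ P : V ≃ₗ[ℂ] V, ∀ n v, P (V.ρ n v) = V.ρ (MulAut.conjNormal g n) (P v) := by
    intro g
    obtain ⟨e, he⟩ := iso_of_char' V (V.ρ.comp (MulAut.conjNormal g).toMonoidHom)
      (fun n => by rw [← hinv g n]; rfl)
    exact ⟨e, he⟩
  have hschur : ∀ f : Module.End ℂ V, (∀ n, f * V.ρ n = V.ρ n * f) → ∃ c : ℂ, f = c • 1 := by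
    intro f hf
    obtain ⟨c, hc⟩ := schur V f (fun n v => congrArg (fun F : Module.End ℂ V => F v) (hf n))
    exact ⟨c, LinearMap.ext hc⟩
  obtain ⟨σ, hσ, hσB⟩ := core (ρ := V.ρ) (B := B) hodd hschur hB' hP
  refine ⟨FDRep.of σ, ?_, ?_, ?_⟩
  · have : Nontrivial (FDRep.of σ) := hnt
    apply simple_of_schur
    intro f hf
    refine schur V f (fun n v => ?_)
    have := hf n v
    rw [FDRep.of_ρ', hσ] at this
    exact this
  · intro n
    change LinearMap.trace ℂ V (σ n) = LinearMap.trace ℂ V (V.ρ n)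
    rw [hσ]
  · intro g
    change (LinearMap.trace ℂ V (σ g)).im = 0
    have h1 := char_inv_star σ g
    have h2 : LinearMap.trace ℂ V (σ g⁻¹) = LinearMap.trace ℂ V (σ g) := by
      have h3 := Representation.char_dual σ g
      change LinearMap.trace ℂ _ (Representation.dual σ g) = LinearMap.trace ℂ V (σ g⁻¹) at h3
      rw [← h3]
      have h4 : Representation.dual σ g = B.conj (σ g) := by
        ext f w
        obtain ⟨v, rfl⟩ := B.surjective f
        have h5 := hσB g v (σ g⁻¹ w)
        rw [← Module.End.mul_apply (σ g) (σ g⁻¹), ← map_mul, mul_inv_cancel, map_one] at h5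
        simp only [LinearEquiv.conj_apply, LinearMap.comp_apply, LinearEquiv.coe_coe,
          LinearEquiv.symm_apply_apply]
        exact h5.symm
      rw [h4, LinearMap.trace_conj']
    rw [h2] at h1
    exact Complex.conj_eq_iff_im.1 h1.symm

lemma uniq {G : Type} [Group G] [Finite G] (N : Subgroup G) [N.Normal] (hodd : Odd N.index)
    (V : FDRep ℂ N) [hV : Simple V] (W₁ W₂ : FDRep ℂ G)
    (h₁ : ∀ n : N, V.character n = W₁.character n) (h₂ : ∀ n : N, V.character n = W₂.character n)
    (r₁ : ∀ g, (W₁.character g).im = 0) (r₂ : ∀ g, (W₂.character g).im = 0) (g : G) :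
    W₁.character g = W₂.character g := by
  have hnt := nontrivial_of_simple V
  obtain ⟨e₁, he₁⟩ := iso_of_char' V (W₁.ρ.comp N.subtype) h₁
  obtain ⟨e₂, he₂⟩ := iso_of_char' V (W₂.ρ.comp N.subtype) h₂
  let σ₁ : G →* Module.End ℂ V := e₁.symm.conjRingEquiv.toMonoidHom.comp W₁.ρ
  let σ₂ : G →* Module.End ℂ V := e₂.symm.conjRingEquiv.toMonoidHom.comp W₂.ρ
  have t₁ : LinearMap.trace ℂ V (σ₁ g) = W₁.character g := LinearMap.trace_conj' _ e₁.symm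
  have t₂ : LinearMap.trace ℂ V (σ₂ g) = W₂.character g := LinearMap.trace_conj' _ e₂.symm
  have k₁ : ∀ n : N, σ₁ n = V.ρ n := fun n => by
    ext v
    change e₁.symm (W₁.ρ n (e₁ v)) = _
    rw [LinearEquiv.symm_apply_eq]; exact (he₁ n v).symm
  have k₂ : ∀ n : N, σ₂ n = V.ρ n := fun n => by
    ext v
    change e₂.symm (W₂.ρ n (e₂ v)) = _
    rw [LinearEquiv.symm_apply_eq]; exact (he₂ n v).symm
  have hc : ∀ n : N, (σ₂ g * σ₁ g⁻¹) * V.ρ n = V.ρ n * (σ₂ g * σ₁ g⁻¹) := fun n => by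
    have a1 : σ₁ g⁻¹ * σ₁ n = σ₁ (MulAut.conjNormal g⁻¹ n : N) * σ₁ g⁻¹ := by
      rw [← map_mul, ← map_mul]; congr 1; simp [mul_assoc]
    have a2 : σ₂ g * σ₂ (MulAut.conjNormal g⁻¹ n : N) = σ₂ n * σ₂ g := by
      rw [← map_mul, ← map_mul]; congr 1; simp [mul_assoc]
    rw [← k₁, mul_assoc, a1, k₁, ← k₂, ← mul_assoc, a2, k₂, k₁, mul_assoc]
  obtain ⟨c, hc⟩ := schur V (σ₂ g * σ₁ g⁻¹)
    (fun n v => congrArg (fun F : Module.End ℂ V => F v) (hc n))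
  have hc1 : σ₂ g = c • σ₁ g := by
    have : σ₂ g * σ₁ g⁻¹ = c • 1 := LinearMap.ext hc
    have h3 := congrArg (· * σ₁ g) this
    simpa [mul_assoc, ← map_mul] using h3
  have hpow : c ^ N.index = 1 := by
    have h3 : σ₂ (g ^ N.index) = σ₁ (g ^ N.index) := by
      have := N.pow_index_mem g
      exact (k₂ ⟨_, this⟩).trans (k₁ ⟨_, this⟩).symm
    rw [map_pow, hc1, smul_pow, ← map_pow] at h3
    have hu : σ₁ (g ^ N.index) ≠ 0 := ((Group.isUnit (g ^ N.index)).map σ₁).ne_zero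
    exact smul_left_injective ℂ hu (by simpa using h3)
  have ht : W₂.character g = c * W₁.character g := by
    rw [← t₁, ← t₂, hc1]; simp
  by_cases h0 : W₁.character g = 0
  · rw [ht, h0, mul_zero]
  have hcr : c.im = 0 := by
    have : c = W₂.character g / W₁.character g := by rw [ht]; field_simp
    rw [this, Complex.div_im, r₁, r₂]; simp
  have hcc : c = (c.re : ℂ) := by apply Complex.ext <;> simp [hcr]
  rw [hcc] at hpow
  have : c.re ^ N.index = 1 := by exact_mod_cast hpow
  have h5 : c.re = 1 := by
    apply hodd.strictMono_pow.injective
    simpa using this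
  rw [ht, hcc, h5]; simp

end NT

/-- Navarro--Tiep: if `M ⊴ H` has odd index and `χ ∈ Irr(M)` is real-valued, then
`χ` has a unique real-valued extension to its inertia group `H_χ`. -/
theorem stmt_11 {H : Type} [Group H] [Fintype H] (M : Subgroup H) [M.Normal]
    (hodd : Odd M.index) (χ : H → ℂ)
    (hsupp : ∀ x : H, x ∉ M → χ x = 0)
    (hirr : IsIrredCharOn M χ)
    (hreal : ∀ x : H, (χ x).im = 0) :
    ∃! ψ : H → ℂ,
      IsIrredCharOn (inertiaGroup χ) ψ ∧
      (∀ x : H, x ∉ inertiaGroup χ → ψ x = 0) ∧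
      (∀ x : H, (ψ x).im = 0) ∧
      (∀ x : H, x ∈ M → ψ x = χ x) := by
  classical
  obtain ⟨V, hV, hχ⟩ := hirr
  have hMT : M ≤ inertiaGroup χ := by
    intro m hm x
    by_cases hx : x ∈ M
    · have h1 := V.char_conj ⟨x, hx⟩ ⟨m⁻¹, inv_mem hm⟩
      rw [← hχ, ← hχ] at h1
      simpa using h1
    · rw [hsupp x hx, hsupp]
      intro h
      apply hx
      have := Subgroup.Normal.conj_mem ‹M.Normal› _ h m
      simpa [mul_assoc] using this
  let N := M.subgroupOf (inertiaGroup χ)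
  have hN : Odd N.index := by
    have h1 : N.index ∣ M.index := Subgroup.relIndex_dvd_index_of_normal M (inertiaGroup χ)
    exact hodd.of_dvd_nat h1
  let ι : N ≃* M := Subgroup.subgroupOfEquivOfLe hMT
  let U : FDRep ℂ N := FDRep.of (V.ρ.comp ι.toMonoidHom)
  have hUc : ∀ n : N, U.character n = χ (n : inertiaGroup χ) := fun n => (hχ (ι n)).symm
  have hU : Simple U := by
    have : Nontrivial U := NT.nontrivial_of_simple V
    apply NT.simple_of_schur
    intro f hf
    refine NT.schur V f fun m v => ?_
    have h1 := hf (ι.symm m) v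
    have h2 : U.ρ (ι.symm m) = V.ρ m := by
      change V.ρ (ι (ι.symm m)) = V.ρ m
      rw [MulEquiv.apply_symm_apply]
    rw [h2] at h1
    exact h1
  obtain ⟨W, hW, hWN, hWr⟩ := NT.exists_ext N hN U (fun n => by rw [hUc]; exact hreal _)
    (fun g n => by
      rw [hUc, hUc]
      have h1 := (inertiaGroup χ).inv_mem g.2 (n : inertiaGroup χ)
      simpa using h1)
  refine ⟨fun x => if h : x ∈ inertiaGroup χ then W.character ⟨x, h⟩ else 0,
    ⟨⟨W, hW, fun k => by simp⟩, fun x hx => by simp [hx], fun x => ?_, fun x hx => ?_⟩, ?_⟩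
  · by_cases h : x ∈ inertiaGroup χ
    · simp [h, hWr]
    · simp [h]
  · simp only [hMT hx, dite_true]
    have h1 := hWN ⟨⟨x, hMT hx⟩, hx⟩
    rw [hUc] at h1
    exact h1
  · rintro ψ ⟨⟨W', hW', hψ⟩, hψ0, hψr, hψM⟩
    funext x
    by_cases h : x ∈ inertiaGroup χ
    · simp only [h, dite_true]
      rw [show ψ x = W'.character ⟨x, h⟩ from hψ ⟨x, h⟩]
      refine NT.uniq N hN U W' W (fun n => ?_) (fun n => (hWN n).symm) (fun g => ?_) hWr _
      · rw [hUc, ← hψ]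
        exact (hψM _ n.2).symm
      · rw [← hψ]; exact hψr _
    · simp only [h, dite_false]
      exact hψ0 x h
end

section
/- Let G be a finite group, M ⊴ G, ψ ∈ Irr(M), and suppose Θ is a character of G extending a multiplicity-free character θ of M (i.e., Θ|_M = θ and θ is a sum of distinct irreducible characters of M, each with multiplicity one). If ψ is a constituent of θ, then there is a unique irreducible constituent ψ̂ of Θ with ⟨ψ̂|_M, ψ⟩ ≥ 1, and moreover ψ̂|_M has ψ as a constituent with multiplicity one whenever G/M is cyclic and ψ is G-invariant; in that case ψ̂ extends ψ. -/
open CategoryTheory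

/-- The usual inner product of class functions of the subgroup `K`,
for functions given on the ambient group `G`. -/
noncomputable def charInner {G : Type} [Group G] (K : Subgroup G) (α β : G → ℂ) : ℂ :=
  (Nat.card K : ℂ)⁻¹ * ∑ᶠ g : K, α g * (starRingEnd ℂ) (β g)

/-- `χ` (a function on the ambient group) restricts to a complex character
of the subgroup `K`. -/
def IsCharOn {G : Type} [Group G] (K : Subgroup G) (χ : G → ℂ) : Prop :=
  ∃ V : FDRep ℂ K, ∀ k : K, χ k = V.character k

open Representation in
/-- The trace of the inverse of an endomorphism of finite order is the conjugate trace. -/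
lemma aux_trace_conj {V : Type} [AddCommGroup V] [Module ℂ V] [FiniteDimensional ℂ V]
    (f f' : Module.End ℂ V) (n : ℕ) (hn : n ≠ 0) (hf : f ^ n = 1) (hff : f' * f = 1) :
    (starRingEnd ℂ) (LinearMap.trace ℂ V f) = LinearMap.trace ℂ V f' := by
  classical
  have hss : f.IsSemisimple := by
    have hsep : (Polynomial.X ^ n - Polynomial.C (1 : ℂ)).Separable :=
      Polynomial.separable_X_pow_sub_C 1 (by exact_mod_cast hn) one_ne_zero
    exact Module.End.isSemisimple_of_squarefree_aeval_eq_zero hsep.squarefree (by simp [hf])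
  have hds := DirectSum.isInternal_submodule_of_iSupIndep_of_iSup_eq_top
    f.eigenspaces_iSupIndep hss.iSup_eigenspace_eq_top
  have hfin : {μ | f.eigenspace μ ≠ ⊥}.Finite :=
    WellFoundedGT.finite_ne_bot_of_iSupIndep f.eigenspaces_iSupIndep
  have hpow : ∀ (μ : ℂ) (x : V), f x = μ • x → ∀ k : ℕ, (f ^ k) x = μ ^ k • x := by
    intro μ x hx k
    induction k with
    | zero => simp
    | succ k ih =>
      rw [pow_succ, Module.End.mul_apply, hx, map_smul, ih, smul_smul, pow_succ, mul_comm]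
  have hroot : ∀ (μ : ℂ) (x : V), f x = μ • x → x ≠ 0 → μ ^ n = 1 := by
    intro μ x hx h0
    have h := hpow μ x hx n
    rw [hf, Module.End.one_apply] at h
    have h2 : (μ ^ n - 1) • x = 0 := by rw [sub_smul, ← h, one_smul, sub_self]
    rcases smul_eq_zero.1 h2 with h3 | h3
    · exact sub_eq_zero.1 h3
    · exact absurd h3 h0
  have hinv : ∀ (μ : ℂ) (x : V), f x = μ • x → f' x = (starRingEnd ℂ μ) • x := by
    intro μ x hx
    by_cases h0 : x = 0
    · simp [h0]
    have hμ := hroot μ x hx h0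
    have hnorm : ‖μ‖ = 1 := Complex.norm_eq_one_of_pow_eq_one hμ hn
    have hc : (starRingEnd ℂ μ) * μ = 1 := by
      rw [mul_comm, Complex.mul_conj, Complex.normSq_eq_norm_sq, hnorm]; simp
    have h1 : f' (f x) = x := by rw [← Module.End.mul_apply, hff, Module.End.one_apply]
    rw [hx, map_smul] at h1
    calc f' x = (starRingEnd ℂ μ * μ) • f' x := by rw [hc, one_smul]
      _ = _ := by rw [mul_smul, h1]
  have m1 : ∀ μ : ℂ, Set.MapsTo f (f.eigenspace μ) (f.eigenspace μ) := by
    intro μ x hx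
    have hx' := Module.End.mem_eigenspace_iff.1 hx
    rw [hx']
    exact Submodule.smul_mem _ _ hx
  have m2 : ∀ μ : ℂ, Set.MapsTo f' (f.eigenspace μ) (f.eigenspace μ) := by
    intro μ x hx
    have hx' := Module.End.mem_eigenspace_iff.1 hx
    rw [hinv μ x hx']
    exact Submodule.smul_mem _ _ hx
  rw [LinearMap.trace_eq_sum_trace_restrict' hds hfin m1,
    LinearMap.trace_eq_sum_trace_restrict' hds hfin m2, map_sum]
  refine Finset.sum_congr rfl fun μ _ => ?_
  have e1 : f.restrict (m1 μ) = μ • LinearMap.id := by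
    ext x
    exact Module.End.mem_eigenspace_iff.1 x.2
  have e2 : f'.restrict (m2 μ) = (starRingEnd ℂ μ) • LinearMap.id := by
    ext x
    exact hinv μ x (Module.End.mem_eigenspace_iff.1 x.2)
  rw [e1, e2]
  simp

lemma aux_char_conj {K : Type} [Group K] [Finite K] {V : Type} [AddCommGroup V] [Module ℂ V]
    [FiniteDimensional ℂ V] (ρ : Representation ℂ K V) (g : K) :
    (starRingEnd ℂ) (ρ.character g) = ρ.character g⁻¹ := by
  refine aux_trace_conj (ρ g) (ρ g⁻¹) (Nat.card K) Nat.card_pos.ne' ?_ ?_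
  · rw [← map_pow, pow_card_eq_one', map_one]
  · rw [← map_mul, inv_mul_cancel, map_one]

lemma aux_charInner {G : Type} [Group G] [Finite G] (K : Subgroup G) (α β : G → ℂ)
    {V W : Type} [AddCommGroup V] [Module ℂ V] [FiniteDimensional ℂ V]
    [AddCommGroup W] [Module ℂ W] [FiniteDimensional ℂ W]
    (ρ : Representation ℂ K V) (σ : Representation ℂ K W)
    (hα : ∀ k : K, α k = ρ.character k) (hβ : ∀ k : K, β k = σ.character k) :
    charInner K α β = Module.finrank ℂ (Representation.IntertwiningMap σ ρ) := by
  have := Fintype.ofFinite K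
  have : Invertible (Nat.card K : ℂ) :=
    invertibleOfNonzero (by exact_mod_cast Nat.card_pos.ne')
  rw [← Representation.card_inv_mul_sum_char_mul_char_eq_finrank, charInner,
    finsum_eq_sum_of_fintype]
  simp_rw [hα, hβ, aux_char_conj]

instance aux_fin {K : Type} [Group K]
    {V W : Type} [AddCommGroup V] [Module ℂ V] [FiniteDimensional ℂ V]
    [AddCommGroup W] [Module ℂ W] [FiniteDimensional ℂ W]
    (ρ : Representation ℂ K V) (σ : Representation ℂ K W) :
    FiniteDimensional ℂ (Representation.IntertwiningMap σ ρ) :=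
  Module.Finite.equiv (Representation.invariantsEquivIntertwiningMap σ ρ)

lemma aux_charInner_ne_zero {G : Type} [Group G] [Finite G] (K : Subgroup G) (α β : G → ℂ)
    {V W : Type} [AddCommGroup V] [Module ℂ V] [FiniteDimensional ℂ V]
    [AddCommGroup W] [Module ℂ W] [FiniteDimensional ℂ W]
    (ρ : Representation ℂ K V) (σ : Representation ℂ K W)
    (hα : ∀ k : K, α k = ρ.character k) (hβ : ∀ k : K, β k = σ.character k) :
    charInner K α β ≠ 0 ↔ ∃ f : Representation.IntertwiningMap σ ρ, f ≠ 0 := by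
  rw [aux_charInner K α β ρ σ hα hβ, Nat.cast_ne_zero, ← Nat.pos_iff_ne_zero,
    Module.finrank_pos_iff, nontrivial_iff_exists_ne 0]

lemma aux_irred_iff {K : Type} [Group K] {V : Type} [AddCommGroup V] [Module ℂ V]
    (ρ : Representation ℂ K V) :
    ρ.IsIrreducible ↔ Nontrivial V ∧
      ∀ U : Submodule ℂ V, (∀ g : K, ∀ v ∈ U, ρ g v ∈ U) → U = ⊥ ∨ U = ⊤ := by
  constructor
  · intro h
    refine ⟨?_, fun U hU => ?_⟩
    · by_contra hn
      rw [not_nontrivial_iff_subsingleton] at hn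
      apply bot_ne_top (α := Subrepresentation ρ)
      exact Subrepresentation.toSubmodule_injective (Subsingleton.elim _ _)
    · rcases h.eq_bot_or_eq_top ⟨U, fun g v hv => hU g v hv⟩ with h1 | h1
      · left; exact congrArg Subrepresentation.toSubmodule h1
      · right; exact congrArg Subrepresentation.toSubmodule h1
  · rintro ⟨hn, h⟩
    refine { exists_pair_ne := ⟨⊥, ⊤, fun hh => ?_⟩, eq_bot_or_eq_top := fun U => ?_ }
    · exact bot_ne_top (α := Submodule ℂ V) (congrArg Subrepresentation.toSubmodule hh)
    · rcases h U.toSubmodule (fun g v hv => U.apply_mem_toSubmodule g hv) with h1 | h1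
      · left; exact Subrepresentation.toSubmodule_injective h1
      · right; exact Subrepresentation.toSubmodule_injective h1

lemma aux_simple_of_irred {K : Type} [Group K] [Finite K] {V : Type} [AddCommGroup V]
    [Module ℂ V] [FiniteDimensional ℂ V] (ρ : Representation ℂ K V) [ρ.IsIrreducible] :
    Simple (FDRep.of ρ) := by
  classical
  have := Fintype.ofFinite K
  have : Invertible (Nat.card K : ℂ) :=
    invertibleOfNonzero (by exact_mod_cast Nat.card_pos.ne')
  rw [FDRep.simple_iff_char_is_norm_one]
  have h := Representation.char_orthonormal ρ ρ
  rw [if_pos ⟨Representation.Equiv.refl ρ⟩,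
    inv_mul_eq_iff_eq_mul₀ (by exact_mod_cast Nat.card_pos.ne'), mul_one] at h
  exact h

lemma aux_irred_of_simple {K : Type} [Group K] [Finite K] (V : FDRep ℂ K) [Simple V] :
    Representation.IsIrreducible V.ρ := by
  rw [aux_irred_iff]
  constructor
  · by_contra hn
    rw [not_nontrivial_iff_subsingleton] at hn
    apply id_nonzero V
    ext x
    exact Subsingleton.elim _ _
  · intro U hU
    let S : Subrepresentation V.ρ := ⟨U, fun g v hv => hU g v hv⟩
    let X : FDRep ℂ K := FDRep.of S.toRepresentation
    let i : X ⟶ V := ⟨InducedCategory.homMk (ModuleCat.ofHom U.subtype), fun g ↦ by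
      ext x; rfl⟩
    have hmono : Mono i := by
      apply ConcreteCategory.mono_of_injective
      exact Subtype.val_injective
    by_cases h0 : i = 0
    · left
      rw [Submodule.eq_bot_iff]
      intro x hx
      have := congrArg (fun j : X ⟶ V => j.hom.hom.hom (⟨x, hx⟩ : U)) h0
      exact this
    · right
      have : IsIso i := isIso_of_mono_of_nonzero h0
      rw [eq_top_iff]
      intro x _
      obtain ⟨y, hy⟩ := (FDRep.isoToLinearEquiv (asIso i)).surjective x
      have : x = (y : U).1 := hy.symm
      rw [this]
      exact (y : U).2

/-- The range of a nonzero `M`-map `σ → ρ|_M` is `G`-stable. -/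
lemma aux_stable {N Γ : Type} [Group N] [Finite N] [Group Γ] (ι : N →* Γ)
    (c : Γ → N →* N) (hc : ∀ g n, ι (c g n) = g * ι n * g⁻¹)
    {V W : Type} [AddCommGroup V] [Module ℂ V] [FiniteDimensional ℂ V]
    [AddCommGroup W] [Module ℂ W] [FiniteDimensional ℂ W]
    (ρ : Representation ℂ Γ V) (σ : Representation ℂ N W) [σ.IsIrreducible]
    (hinv : ∀ g n, σ.character (c g n) = σ.character n)
    (f : Representation.IntertwiningMap σ (ρ.comp ι))
    (hf : ∀ h : Representation.IntertwiningMap σ (ρ.comp ι), ∃ a : ℂ, a • f = h)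
    (g : Γ) (v : V) (hv : v ∈ LinearMap.range f.toLinearMap) :
    ρ g v ∈ LinearMap.range f.toLinearMap := by
  have := Fintype.ofFinite N
  have : Invertible (Nat.card N : ℂ) :=
    invertibleOfNonzero (by exact_mod_cast Nat.card_pos.ne')
  let σg : Representation ℂ N W := σ.comp (c g⁻¹)
  have hchar : ∀ n, σg.character n = σ.character n := fun n => hinv g⁻¹ n
  have h1 : Module.finrank ℂ (Representation.IntertwiningMap σ σg) = 1 := by
    have h2 := Representation.card_inv_mul_sum_char_mul_char_eq_finrank σ σg
    simp_rw [hchar] at h2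
    rw [Representation.card_inv_mul_sum_char_mul_char_eq_finrank,
      Representation.IsIrreducible.finrank_intertwiningMap_self] at h2
    exact_mod_cast h2.symm
  have : Nontrivial (Representation.IntertwiningMap σ σg) :=
    Module.nontrivial_of_finrank_pos (R := ℂ) (by omega)
  obtain ⟨φ, hφ⟩ := exists_ne (0 : Representation.IntertwiningMap σ σg)
  have hinj : Function.Injective φ.toLinearMap :=
    (Representation.IsIrreducible.injective_or_eq_zero φ).resolve_right hφ
  have hsurj : Function.Surjective φ.toLinearMap := LinearMap.injective_iff_surjective.1 hinj
  let h : Representation.IntertwiningMap σ (ρ.comp ι) :=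
    LinearMap.intertwiningMap_of_isIntertwiningMap σ (ρ.comp ι)
      (ρ g ∘ₗ f.toLinearMap ∘ₗ φ.toLinearMap) (by
        intro n w
        have e1 : φ (σ n w) = σ (c g⁻¹ n) (φ w) := Representation.IntertwiningMap.isIntertwining _ _ φ n w
        have e2 : f (σ (c g⁻¹ n) (φ w)) = ρ (ι (c g⁻¹ n)) (f (φ w)) :=
          Representation.IntertwiningMap.isIntertwining _ _ f (c g⁻¹ n) (φ w)
        change ρ g (f (φ (σ n w))) = ρ (ι n) (ρ g (f (φ w)))
        rw [e1, e2, hc, ← Module.End.mul_apply, ← Module.End.mul_apply, ← map_mul, ← map_mul]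
        congr 2
        group)
  obtain ⟨a, ha⟩ := hf h
  obtain ⟨w, rfl⟩ := hv
  obtain ⟨u, rfl⟩ := hsurj w
  refine ⟨a • u, ?_⟩
  have e3 : (a • f) u = h u := by rw [ha]
  rw [map_smul]
  exact e3

/-- The core statement: uniqueness and extension. -/
lemma aux_core {N Γ : Type} [Group N] [Group Γ] (ι : N →* Γ)
    {V W X : Type} [AddCommGroup V] [Module ℂ V]
    [AddCommGroup W] [Module ℂ W] [AddCommGroup X] [Module ℂ X]
    (ρ : Representation ℂ Γ V) (σ : Representation ℂ N W) [σ.IsIrreducible]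
    (τ : Representation ℂ Γ X) [hτ : τ.IsIrreducible]
    (f : Representation.IntertwiningMap σ (ρ.comp ι))
    (hf : ∀ h : Representation.IntertwiningMap σ (ρ.comp ι), ∃ a : ℂ, a • f = h)
    (U : Subrepresentation ρ) (hU : U.toSubmodule = LinearMap.range f.toLinearMap)
    (i : Representation.IntertwiningMap τ ρ) (hi : i ≠ 0)
    (j : Representation.IntertwiningMap σ (τ.comp ι)) (hj : j ≠ 0) :
    τ.character = U.toRepresentation.character ∧
      ∀ n, τ.character (ι n) = σ.character n := by
  have hinj : Function.Injective i :=
    (Representation.IsIrreducible.injective_or_eq_zero i).resolve_right hi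
  have hjinj : Function.Injective j :=
    (Representation.IsIrreducible.injective_or_eq_zero j).resolve_right hj
  let ij : Representation.IntertwiningMap σ (ρ.comp ι) :=
    LinearMap.intertwiningMap_of_isIntertwiningMap σ (ρ.comp ι)
      (i.toLinearMap ∘ₗ j.toLinearMap) (by
        intro n w
        have e1 : j (σ n w) = τ (ι n) (j w) := Representation.IntertwiningMap.isIntertwining _ _ j n w
        change i (j (σ n w)) = ρ (ι n) (i (j w))
        rw [e1, Representation.IntertwiningMap.isIntertwining _ _ i])
  obtain ⟨a, ha⟩ := hf ij
  have hap : ∀ w, a • f w = i (j w) := fun w => by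
    have : (a • f) w = ij w := by rw [ha]
    exact this
  obtain ⟨hnW, -⟩ := (aux_irred_iff σ).1 inferInstance
  obtain ⟨w0, hw0⟩ := exists_ne (0 : W)
  have hj0 : j w0 ≠ 0 := fun h => hw0 (hjinj (by rw [h, map_zero]))
  have hij0 : i (j w0) ≠ 0 := fun h => hj0 (hinj (by rw [h, map_zero]))
  have ha0 : a ≠ 0 := by
    rintro rfl
    apply hij0
    rw [← hap, zero_smul]
  have hmemU : ∀ v, v ∈ U.toSubmodule ↔ ∃ w, f w = v := by
    intro v
    rw [hU]
    exact Iff.rfl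
  have hrange : ∀ v ∈ U.toSubmodule, ∃ w, i (j w) = v := by
    intro v hv
    obtain ⟨w, rfl⟩ := (hmemU v).1 hv
    refine ⟨a⁻¹ • w, ?_⟩
    rw [← hap, map_smul, smul_smul, mul_inv_cancel₀ ha0, one_smul]
  have hall : ∀ x, i x ∈ U.toSubmodule := by
    rcases ((aux_irred_iff τ).1 hτ).2 (U.toSubmodule.comap i.toLinearMap) (by
      intro g x hx
      change i (τ g x) ∈ U.toSubmodule
      rw [Representation.IntertwiningMap.isIntertwining _ _ i]
      exact U.apply_mem_toSubmodule g hx) with h1 | h1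
    · exfalso
      apply hj0
      rw [Submodule.eq_bot_iff] at h1
      apply h1
      change i (j w0) ∈ U.toSubmodule
      rw [hmemU]
      exact ⟨a • w0, by rw [map_smul, hap]⟩
    · intro x
      have : x ∈ U.toSubmodule.comap i.toLinearMap := by rw [h1]; trivial
      exact this
  constructor
  · let k : Representation.IntertwiningMap τ U.toRepresentation :=
      LinearMap.intertwiningMap_of_isIntertwiningMap τ U.toRepresentation
        (i.toLinearMap.codRestrict U.toSubmodule hall) (by
          intro g x
          apply Subtype.ext
          exact Representation.IntertwiningMap.isIntertwining _ _ i g x)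
    refine Representation.char_iso (k.ofBijective ⟨?_, ?_⟩)
    · intro x y hxy
      exact hinj (congrArg Subtype.val hxy)
    · rintro ⟨v, hv⟩
      obtain ⟨w, hw⟩ := hrange v hv
      exact ⟨j w, Subtype.ext hw⟩
  · intro n
    have := Representation.char_iso (j.ofBijective ⟨hjinj, fun x => by
      obtain ⟨w, hw⟩ := hrange (i x) (hall x)
      exact ⟨w, hinj hw⟩⟩)
    rw [this]
    rfl

/-- The `G`-stable range of `f` is irreducible. -/
lemma aux_irred_range {N Γ : Type} [Group N] [Group Γ] (ι : N →* Γ)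
    {V W : Type} [AddCommGroup V] [Module ℂ V] [AddCommGroup W] [Module ℂ W]
    (ρ : Representation ℂ Γ V) (σ : Representation ℂ N W) [hσ : σ.IsIrreducible]
    (f : Representation.IntertwiningMap σ (ρ.comp ι)) (hf0 : f ≠ 0)
    (U : Subrepresentation ρ) (hU : U.toSubmodule = LinearMap.range f.toLinearMap) :
    U.toRepresentation.IsIrreducible := by
  have hinj : Function.Injective f :=
    (Representation.IsIrreducible.injective_or_eq_zero f).resolve_right hf0
  have hmem : ∀ w, f w ∈ U.toSubmodule := fun w => by rw [hU]; exact ⟨w, rfl⟩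
  obtain ⟨hnW, hsub⟩ := (aux_irred_iff σ).1 hσ
  rw [aux_irred_iff]
  let f' : W →ₗ[ℂ] U.toSubmodule := f.toLinearMap.codRestrict U.toSubmodule hmem
  have hf' : Function.Injective f' := fun x y hxy => hinj (congrArg Subtype.val hxy)
  have hf's : Function.Surjective f' := by
    rintro ⟨v, hv⟩
    have hv' := hv
    rw [hU] at hv'
    obtain ⟨w, hw⟩ := hv'
    exact ⟨w, Subtype.ext hw⟩
  refine ⟨hf'.nontrivial, fun P hP => ?_⟩
  rcases hsub (P.comap f') (by
    intro n w hw
    have h1 : f' (σ n w) = U.toRepresentation (ι n) (f' w) :=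
      Subtype.ext (Representation.IntertwiningMap.isIntertwining _ _ f n w)
    change f' (σ n w) ∈ P
    rw [h1]
    exact hP _ _ hw) with h1 | h1
  · left
    rw [Submodule.eq_bot_iff] at h1 ⊢
    intro x hx
    obtain ⟨w, rfl⟩ := hf's x
    rw [h1 w hx, map_zero]
  · right
    rw [eq_top_iff]
    intro x _
    obtain ⟨w, rfl⟩ := hf's x
    have : w ∈ P.comap f' := by rw [h1]; trivial
    exact this

/-- Let `M ⊴ G` with `G/M` cyclic, `θ` a multiplicity-free character of `M`,
`ψ` a `G`-invariant irreducible constituent of `θ`, and `Θ` a character of `G`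
with `Θ|_M = θ`.  Then `Θ` has a unique irreducible constituent `ψ̂` whose
restriction to `M` contains `ψ`, and every such constituent extends `ψ`. -/
theorem stmt_18 {G : Type} [Group G] [Fintype G] (M : Subgroup G) [M.Normal]
    (hcyc : IsCyclic (G ⧸ M))
    (θ ψ Θ : G → ℂ)
    (hθ : IsCharOn M θ)
    (hmultfree : ∀ χ : G → ℂ, IsIrredCharOn M χ →
      charInner M θ χ = 0 ∨ charInner M θ χ = 1)
    (hψ : IsIrredCharOn M ψ)
    (hψθ : charInner M θ ψ ≠ 0)
    (hψinv : ∀ g x : G, x ∈ M → ψ (g⁻¹ * x * g) = ψ x)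
    (hΘ : IsCharOn ⊤ Θ)
    (hΘθ : ∀ m : G, m ∈ M → Θ m = θ m) :
    (∃! ψhat : G → ℂ, IsIrredCharOn ⊤ ψhat ∧ charInner ⊤ Θ ψhat ≠ 0 ∧
        charInner M ψhat ψ ≠ 0) ∧
    (∀ ψhat : G → ℂ, IsIrredCharOn ⊤ ψhat → charInner ⊤ Θ ψhat ≠ 0 →
        charInner M ψhat ψ ≠ 0 → ∀ m : G, m ∈ M → ψhat m = ψ m) := by
  obtain ⟨Vθ, hVθ⟩ := hθ
  obtain ⟨FW, hFW, hWψ⟩ := id hψ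
  obtain ⟨FV, hVΘ⟩ := hΘ
  let ι : M →* (⊤ : Subgroup G) := Subgroup.inclusion le_top
  let σ : Representation ℂ M FW := FW.ρ
  let ρ : Representation ℂ (⊤ : Subgroup G) FV := FV.ρ
  have hσ : σ.IsIrreducible := aux_irred_of_simple FW
  have hψσ : ∀ m : M, ψ m = σ.character m := hWψ
  have hΘρ : ∀ g : (⊤ : Subgroup G), Θ g = ρ.character g := hVΘ
  have hθρ : ∀ m : M, θ m = Representation.character (ρ.comp ι) m := fun m => by
    rw [← hΘθ m m.2]
    exact hΘρ (ι m)
  let c : (⊤ : Subgroup G) → M →* M := fun g => (MulAut.conjNormal (g : G)).toMonoidHom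
  have hc : ∀ g n, ι (c g n) = g * ι n * g⁻¹ := fun g n => Subtype.ext rfl
  have hinv : ∀ g n, σ.character (c g n) = σ.character n := by
    intro g n
    rw [← hψσ, ← hψσ]
    have := hψinv (g : G)⁻¹ n n.2
    rw [inv_inv] at this
    exact this
  have hone : charInner M θ ψ = 1 := (hmultfree ψ hψ).resolve_left hψθ
  rw [aux_charInner M θ ψ (ρ.comp ι) σ hθρ hψσ] at hone
  have hrank : Module.finrank ℂ (Representation.IntertwiningMap σ (ρ.comp ι)) = 1 := by
    exact_mod_cast hone
  obtain ⟨f, hf0⟩ := (aux_charInner_ne_zero M θ ψ (ρ.comp ι) σ hθρ hψσ).1 hψθ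
  have hf := (finrank_eq_one_iff_of_nonzero' f hf0).1 hrank
  let U : Subrepresentation ρ := ⟨LinearMap.range f.toLinearMap,
    fun g v hv => aux_stable ι c hc ρ σ hinv f hf g v hv⟩
  have hUirr : U.toRepresentation.IsIrreducible := aux_irred_range ι ρ σ f hf0 U rfl
  have key : ∀ ψhat : G → ℂ, IsIrredCharOn ⊤ ψhat → charInner ⊤ Θ ψhat ≠ 0 →
      charInner M ψhat ψ ≠ 0 →
      (∀ g : (⊤ : Subgroup G), ψhat g = U.toRepresentation.character g) ∧
      ∀ m : M, ψhat m = ψ m := by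
    rintro χ ⟨FX, hFX, hXχ⟩ h1 h2
    let τ : Representation ℂ (⊤ : Subgroup G) FX := FX.ρ
    have hτ : τ.IsIrreducible := aux_irred_of_simple FX
    have hχτ : ∀ g : (⊤ : Subgroup G), χ g = τ.character g := hXχ
    have hχM : ∀ m : M, χ m = Representation.character (τ.comp ι) m := fun m => hχτ (ι m)
    obtain ⟨i, hi⟩ := (aux_charInner_ne_zero ⊤ Θ χ ρ τ hΘρ hχτ).1 h1
    obtain ⟨j, hj⟩ := (aux_charInner_ne_zero M χ ψ (τ.comp ι) σ hχM hψσ).1 h2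
    obtain ⟨r1, r2⟩ := aux_core ι ρ σ τ f hf U rfl i hi j hj
    refine ⟨fun g => by rw [hχτ, r1], fun m => ?_⟩
    rw [hψσ, ← r2]
    exact hχτ (ι m)
  refine ⟨?_, fun χ h1 h2 h3 m hm => (key χ h1 h2 h3).2 ⟨m, hm⟩⟩
  obtain ⟨hnU, -⟩ := (aux_irred_iff U.toRepresentation).1 hUirr
  refine ⟨fun g => U.toRepresentation.character ⟨g, trivial⟩, ⟨?_, ?_, ?_⟩, ?_⟩
  · exact ⟨FDRep.of U.toRepresentation, aux_simple_of_irred _, fun k => rfl⟩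
  · rw [aux_charInner_ne_zero ⊤ _ _ ρ U.toRepresentation hΘρ (fun k => rfl)]
    refine ⟨⟨U.toSubmodule.subtype, fun g => rfl⟩, fun h => ?_⟩
    obtain ⟨u, hu⟩ := exists_ne (0 : U.toSubmodule)
    apply hu
    exact Subtype.ext (DFunLike.congr_fun h u)
  · rw [aux_charInner_ne_zero M _ _ (U.toRepresentation.comp ι) σ (fun k => rfl) hψσ]
    refine ⟨LinearMap.intertwiningMap_of_isIntertwiningMap σ (U.toRepresentation.comp ι)
      (f.toLinearMap.codRestrict U.toSubmodule fun w => ⟨w, rfl⟩)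
      (fun n w => Subtype.ext (Representation.IntertwiningMap.isIntertwining _ _ f n w)), fun h => hf0 ?_⟩
    ext w
    exact congrArg Subtype.val (DFunLike.congr_fun h w)
  · rintro χ ⟨h1, h2, h3⟩
    funext g
    exact (key χ h1 h2 h3).1 ⟨g, trivial⟩
end
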